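/- (Functional implicit differentiation.) Assume: (i) for every ω ∈ Ω there exist μ > 0 and a neighborhood of ω on which h ↦ L_in(ω',h) is μ-strongly convex for every ω' in that neighborhood; (ii) h ↦ L_in(ω,h) is finite-valued and Fréchet differentiable on H for every ω; (iii) the map (ω,h) ↦ ∂_h L_in(ω,h) ∈ H is Hadamard differentiable on Ω × H. Then for every ω the minimizer h*_ω of h ↦ L_in(ω,h) over H exists and is unique, the map ω ↦ h*_ω is Fréchet differentiable, and its derivative ∂_ω h*_ω (a bounded linear map H → ℝ^d in adjoint form) satisfies the linear equation B_ω + ∂_ω h*_ω ∘ C_ω = 0, where B_ω := ∂_{ω,h}L_in(ω,h*_ω) (the partial derivative in ω of ∂_h L_in at (ω,h*_ω)) and C_ω := ∂²_h L_in(ω,h*_ω) (the partial derivative in h of ∂_h L_in at (ω,h*_ω)). -/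

import Mathlib

open Filter Topology

/-- Hadamard differentiability of `L` at `a` with differential `D`. -/
def HadamardDiffAt {A B : Type*} [NormedAddCommGroup A] [NormedSpace ℝ A]
    [NormedAddCommGroup B] [NormedSpace ℝ B] (L : A → B) (a : A) (D : A →L[ℝ] B) : Prop :=
  ∀ (u : ℕ → A) (ulim : A) (t : ℕ → ℝ),
    Tendsto u atTop (nhds ulim) → (∀ n, t n ≠ 0) → Tendsto t atTop (nhds 0) →
    Tendsto (fun n => ‖(t n)⁻¹ • (L (a + t n • u n) - L a) - D ulim‖) atTop (nhds 0)

/-- `f` is `μ`-strongly convex if `h ↦ f h - (μ/2)‖h‖²` is convex. -/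
def StronglyConvex {H : Type*} [NormedAddCommGroup H] [NormedSpace ℝ H]
    (μ : ℝ) (f : H → ℝ) : Prop :=
  ConvexOn ℝ Set.univ fun h => f h - μ / 2 * ‖h‖ ^ 2

/-!
The gradient of a `μ`-strongly convex function is `μ`-strongly monotone, so
`μ ‖x - h*_ω'‖ ≤ ‖∂ₕ L_in (ω', x)‖` for all `ω'` near `ω` and all `x`.  Strong monotonicity passes
to the Hadamard derivative `C_ω` of the gradient, which is therefore invertible by Lax–Milgram, and
`J := -C_ω⁻¹ ∘ B_ω` is the candidate derivative.  Taking `x = h*_ω + t J u` in the inequality bounds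
the error of the first-order expansion of `h*` by the gradient at a point where its own first-order
expansion vanishes.  This gives Hadamard differentiability, which by compactness of the unit sphere
is Fréchet differentiability in finite dimension.  The Hessian is symmetric because its restriction
to each plane is a genuine second Fréchet derivative, so the equation `B_ω + C_ω ∘ J = 0` can be
transposed.
-/

open scoped RealInnerProductSpace

namespace HadamardDiffAt

variable {A B C : Type*} [NormedAddCommGroup A] [NormedSpace ℝ A] [NormedAddCommGroup B]
  [NormedSpace ℝ B] [NormedAddCommGroup C] [NormedSpace ℝ C]

theorem tendsto_inv_smul_sub {L : A → B} {a v : A} {D : A →L[ℝ] B} (hL : HadamardDiffAt L a D)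
    {u : ℕ → A} {t : ℕ → ℝ} (hu : Tendsto u atTop (𝓝 v)) (ht₀ : ∀ n, t n ≠ 0)
    (ht : Tendsto t atTop (𝓝 0)) :
    Tendsto (fun n => (t n)⁻¹ • (L (a + t n • u n) - L a)) atTop (𝓝 (D v)) :=
  tendsto_iff_norm_sub_tendsto_zero.2 (hL u v t hu ht₀ ht)

theorem of_hasFDerivAt {L : A → B} {a : A} {D : A →L[ℝ] B} (hL : HasFDerivAt L D a) :
    HadamardDiffAt L a D := by
  intro u v t hu ht₀ ht
  refine tendsto_iff_norm_sub_tendsto_zero.1 (hL.hasFDerivWithinAt (s := .univ) |>.lim ?_ ?_ ?_)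
  · simpa using ht.smul hu
  · exact .of_forall fun _ => Set.mem_univ _
  · simpa only [inv_smul_smul₀ (ht₀ _)] using hu

theorem comp {M : B → C} {L : A → B} {a : A} {D : A →L[ℝ] B} {D' : B →L[ℝ] C}
    (hM : HadamardDiffAt M (L a) D') (hL : HadamardDiffAt L a D) :
    HadamardDiffAt (M ∘ L) a (D' ∘L D) := by
  intro u v t hu ht₀ ht
  have hquot := hM.tendsto_inv_smul_sub (hL.tendsto_inv_smul_sub hu ht₀ ht) ht₀ ht
  simp only [smul_inv_smul₀ (ht₀ _), add_sub_cancel] at hquot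
  exact tendsto_iff_norm_sub_tendsto_zero.1 hquot

theorem comp_prodMk_right {F : A × B → C} {a : A} {b : B} {D : A × B →L[ℝ] C}
    (hF : HadamardDiffAt F (a, b) D) :
    HadamardDiffAt (fun b => F (a, b)) b (D ∘L .inr ℝ A B) :=
  hF.comp (L := fun b => (a, b)) (.of_hasFDerivAt (hasFDerivAt_prodMk_right a b))

theorem hasFDerivAt [FiniteDimensional ℝ A] {L : A → B} {a : A} {D : A →L[ℝ] B}
    (hL : HadamardDiffAt L a D) : HasFDerivAt L D a := by
  have : ProperSpace A := FiniteDimensional.proper ℝ A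
  rw [← hasFDerivWithinAt_univ, ← hasFDerivWithinAt_sdiff_singleton_self,
    hasFDerivWithinAt_iff_tendsto]
  refine tendsto_of_subseq_tendsto fun x hx => ?_
  obtain ⟨hxa, hx_mem⟩ := tendsto_nhdsWithin_iff.1 hx
  obtain ⟨N, hN⟩ := eventually_atTop.1 hx_mem
  let t : ℕ → ℝ := fun n => ‖x (n + N) - a‖
  let u : ℕ → A := fun n => (t n)⁻¹ • (x (n + N) - a)
  have ht₀ (n : ℕ) : t n ≠ 0 := norm_ne_zero_iff.2 (sub_ne_zero.2 (hN _ (Nat.le_add_left N n)).2)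
  have ht : Tendsto t atTop (𝓝 0) :=
    (tendsto_iff_norm_sub_tendsto_zero.1 hxa).comp (tendsto_add_atTop_nat N)
  have hu (n : ℕ) : u n ∈ Metric.sphere (0 : A) 1 := by
    simpa [u, t, norm_smul] using inv_mul_cancel₀ (ht₀ n)
  obtain ⟨v, -, φ, hφ, huv⟩ := (isCompact_sphere (0 : A) 1).tendsto_subseq hu
  have hremainder : Tendsto (fun n => (t (φ n))⁻¹ • (L (a + t (φ n) • u (φ n)) - L a) - D (u (φ n)))
      atTop (𝓝 0) := by
    simpa using (hL.tendsto_inv_smul_sub huv (fun n => ht₀ (φ n))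
      (ht.comp hφ.tendsto_atTop)).sub ((D.continuous.tendsto v).comp huv)
  refine ⟨fun n => φ n + N, (tendsto_zero_iff_norm_tendsto_zero.1 hremainder).congr fun n => ?_⟩
  rw [smul_inv_smul₀ (ht₀ _), add_sub_cancel, map_smul, ← smul_sub, norm_smul, norm_inv, norm_norm]

theorem of_implicit {F : A × B → C} {h : A → B} {a : A} {D : A × B →L[ℝ] C} {J : A →L[ℝ] B} {c : ℝ}
    (hc : 0 < c) (hF : HadamardDiffAt F (a, h a) D) (hzero : F (a, h a) = 0)
    (hexpand : ∀ᶠ a' in 𝓝 a, ∀ b, c * ‖b - h a'‖ ≤ ‖F (a', b)‖) (hJ : ∀ v, D (v, J v) = 0) :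
    HadamardDiffAt h a J := by
  intro u v t hu ht₀ ht
  have hFquot : Tendsto (fun n => (t n)⁻¹ • F (a + t n • u n, h a + t n • J v)) atTop (𝓝 0) := by
    simpa [hzero, hJ] using
      hF.tendsto_inv_smul_sub (hu.prodMk_nhds (tendsto_const_nhds (x := J v))) ht₀ ht
  have hbound : Tendsto (fun n => c⁻¹ * ‖(t n)⁻¹ • F (a + t n • u n, h a + t n • J v)‖)
      atTop (𝓝 0) := by
    simpa using hFquot.norm.const_mul c⁻¹
  have hnear : Tendsto (fun n => a + t n • u n) atTop (𝓝 a) := by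
    simpa using (ht.smul hu).const_add a
  refine squeeze_zero' (.of_forall fun _ => norm_nonneg _) ?_ hbound
  filter_upwards [hnear.eventually hexpand] with n hn
  have herror : (t n)⁻¹ • (h (a + t n • u n) - h a) - J v
      = -((t n)⁻¹ • (h a + t n • J v - h (a + t n • u n))) := by
    simp only [smul_sub, smul_add, inv_smul_smul₀ (ht₀ n)]
    abel
  rw [herror, norm_neg, norm_smul, norm_smul, le_inv_mul_iff₀ hc, mul_left_comm]
  gcongr
  exact hn _

end HadamardDiffAt

section Gradient

variable {H : Type*} [NormedAddCommGroup H] [InnerProductSpace ℝ H] [CompleteSpace H]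

theorem gradient_eq_zero_of_forall_le {f : H → ℝ} {x g : H} (hg : HasGradientAt f g x)
    (hmin : ∀ y, f x ≤ f y) : g = 0 := by
  have hlocal : IsLocalMin f x := .of_forall hmin
  simpa using hlocal.hasFDerivAt_eq_zero hg.hasFDerivAt

theorem isSelfAdjoint_of_hadamardDiffAt_gradient {f : H → ℝ} {g : H → H}
    (hg : ∀ x, HasGradientAt f (g x) x) {x : H} {C : H →L[ℝ] H} (hC : HadamardDiffAt g x C) :
    IsSelfAdjoint C := by
  refine ContinuousLinearMap.isSelfAdjoint_iff_isSymmetric.2 fun v w => ?_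
  let P : ℝ × ℝ →L[ℝ] H := (ContinuousLinearMap.fst ℝ ℝ ℝ).smulRight v
    + (ContinuousLinearMap.snd ℝ ℝ ℝ).smulRight w
  let T : H →L[ℝ] (ℝ × ℝ →L[ℝ] ℝ) :=
    ((ContinuousLinearMap.compL ℝ (ℝ × ℝ) H ℝ).flip P).comp (innerSL ℝ)
  have hplane (s : ℝ × ℝ) : HasFDerivAt (fun s => x + P s) P s := P.hasFDerivAt.const_add x
  have hfirst (s : ℝ × ℝ) : HasFDerivAt (fun s => f (x + P s)) (T (g (x + P s))) s :=
    (hg (x + P s)).hasFDerivAt.comp s (hplane s)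
  have hgrad : HasFDerivAt (fun s => g (x + P s)) (C ∘L P) 0 :=
    (HadamardDiffAt.comp (L := fun s => x + P s) (by simpa using hC)
      (.of_hasFDerivAt (hplane 0))).hasFDerivAt
  have hsecond : HasFDerivAt (fun s => T (g (x + P s))) (T ∘L C ∘L P) 0 :=
    T.hasFDerivAt.comp (0 : ℝ × ℝ) hgrad
  simpa [T, P, real_inner_comm] using second_derivative_symmetric hfirst hsecond (1, 0) (0, 1)

end Gradient

theorem add_hasFDerivAt_le_of_convexOn {E : Type*} [NormedAddCommGroup E] [NormedSpace ℝ E]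
    {s : Set E} {f : E → ℝ} (hf : ConvexOn ℝ s f) {x y : E} (hx : x ∈ s) (hy : y ∈ s)
    {f' : E →L[ℝ] ℝ} (hf' : HasFDerivAt f f' x) : f x + f' (y - x) ≤ f y := by
  have hconvex := hf.comp_affineMap (AffineMap.lineMap x y : ℝ →ᵃ[ℝ] E)
  have hderiv : HasDerivAt (f ∘ AffineMap.lineMap x y) (f' (y - x)) (0 : ℝ) :=
    HasFDerivAt.comp_hasDerivAt (0 : ℝ) (by simpa using hf') AffineMap.hasDerivAt_lineMap
  have hslope := hconvex.le_slope_of_hasDerivAt (by simpa using hx) (y := 1) (by simpa using hy)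
    one_pos hderiv
  simp only [slope_def_field, Function.comp_apply, AffineMap.lineMap_apply_one,
    AffineMap.lineMap_apply_zero, sub_zero, div_one] at hslope
  linarith

/-- Strong monotonicity of an operator with modulus `μ`; gradients of `μ`-strongly convex functions
have this property. -/
def StronglyMonotone {H : Type*} [NormedAddCommGroup H] [InnerProductSpace ℝ H] (μ : ℝ)
    (g : H → H) : Prop :=
  ∀ x y, μ * ‖y - x‖ ^ 2 ≤ ⟪g y - g x, y - x⟫

namespace StronglyConvex

variable {H : Type*} [NormedAddCommGroup H] [InnerProductSpace ℝ H] {μ : ℝ} {f : H → ℝ}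

theorem strongConvexOn (hf : StronglyConvex μ f) : StrongConvexOn Set.univ μ f :=
  strongConvexOn_iff_convex.2 hf

theorem eq_of_forall_le (hf : StronglyConvex μ f) (hμ : 0 < μ) {x y : H} (hx : ∀ z, f x ≤ f z)
    (hy : ∀ z, f y ≤ f z) : x = y :=
  (hf.strongConvexOn.strictConvexOn hμ).eq_of_isMinOn (fun z _ => hx z) (fun z _ => hy z)
    (Set.mem_univ x) (Set.mem_univ y)

theorem mul_dist_sq_le (hf : StronglyConvex μ f) {m : ℝ} (hm : ∀ z, m ≤ f z) (x y : H) :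
    μ / 8 * dist x y ^ 2 ≤ (f x + f y) / 2 - m := by
  have hmid := hf.strongConvexOn.2 (Set.mem_univ x) (Set.mem_univ y) one_half_pos.le one_half_pos.le
    (add_halves 1)
  simp only [smul_eq_mul] at hmid
  rw [dist_eq_norm]
  linarith [hm ((1 / 2 : ℝ) • x + (1 / 2 : ℝ) • y)]

theorem cauchySeq_of_tendsto (hf : StronglyConvex μ f) (hμ : 0 < μ) {m : ℝ} (hm : ∀ z, m ≤ f z)
    {x : ℕ → H} (hx : Tendsto (f ∘ x) atTop (𝓝 m)) : CauchySeq x := by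
  rw [cauchySeq_iff_tendsto_dist_atTop_0]
  have hfx : Tendsto (fun n : ℕ × ℕ => (f (x n.1) + f (x n.2)) / 2 - m) atTop (𝓝 0) := by
    rw [← prod_atTop_atTop_eq]
    simpa using (((hx.comp tendsto_fst).add (hx.comp tendsto_snd)).div_const 2).sub_const m
  have hbound : Tendsto (fun n : ℕ × ℕ => √((μ / 8)⁻¹ * ((f (x n.1) + f (x n.2)) / 2 - m)))
      atTop (𝓝 0) := by
    simpa using (hfx.const_mul (μ / 8)⁻¹).sqrt
  refine squeeze_zero (fun _ => dist_nonneg) (fun n => Real.le_sqrt_of_sq_le ?_) hbound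
  rw [le_inv_mul_iff₀ (by positivity)]
  exact hf.mul_dist_sq_le hm _ _

variable [CompleteSpace H]

theorem exists_forall_le_of_bddBelow (hf : StronglyConvex μ f) (hμ : 0 < μ) (hcont : Continuous f)
    (hbdd : BddBelow (Set.range f)) : ∃ x, ∀ y, f x ≤ f y := by
  obtain ⟨_, -, hlim, hmem⟩ := exists_seq_tendsto_sInf (Set.range_nonempty f) hbdd
  choose x hx using hmem
  obtain rfl := funext hx
  have hinf (y : H) : sInf (Set.range f) ≤ f y := csInf_le hbdd ⟨y, rfl⟩
  obtain ⟨a, ha⟩ := cauchySeq_tendsto_of_complete (hf.cauchySeq_of_tendsto hμ hinf hlim)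
  have hfa : f a = sInf (Set.range f) := tendsto_nhds_unique ((hcont.tendsto a).comp ha) hlim
  exact ⟨a, fun y => hfa.trans_le (hinf y)⟩

theorem add_inner_gradient_add_le (hf : StronglyConvex μ f) {x g : H} (hg : HasGradientAt f g x)
    (y : H) : f x + ⟪g, y - x⟫ + μ / 2 * ‖y - x‖ ^ 2 ≤ f y := by
  have htangent := add_hasFDerivAt_le_of_convexOn hf (Set.mem_univ x) (Set.mem_univ y)
    (hg.hasFDerivAt.sub ((hasStrictFDerivAt_norm_sq x).hasFDerivAt.const_mul (μ / 2)))
  simp only [sub_apply, InnerProductSpace.toDual_apply_apply, smul_apply, coe_innerSL_apply,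
    nsmul_eq_mul, Nat.cast_ofNat, smul_eq_mul] at htangent
  have hexpand := norm_add_sq_real x (y - x)
  rw [add_sub_cancel] at hexpand
  linear_combination htangent - μ / 2 * hexpand

theorem bddBelow_range (hf : StronglyConvex μ f) (hμ : 0 < μ) {x g : H}
    (hg : HasGradientAt f g x) : BddBelow (Set.range f) := by
  refine ⟨f x - ‖g‖ ^ 2 / (2 * μ), Set.forall_mem_range.2 fun y => ?_⟩
  have hcauchy : -(‖g‖ * ‖y - x‖) ≤ ⟪g, y - x⟫ := neg_le_of_abs_le (abs_real_inner_le_norm _ _)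
  have hsquare : μ / 2 * ‖y - x‖ ^ 2 - ‖g‖ * ‖y - x‖ + ‖g‖ ^ 2 / (2 * μ)
      = (μ * ‖y - x‖ - ‖g‖) ^ 2 / (2 * μ) := by
    field_simp
    ring
  have hnonneg : 0 ≤ (μ * ‖y - x‖ - ‖g‖) ^ 2 / (2 * μ) := by positivity
  linarith [hf.add_inner_gradient_add_le hg y]

theorem exists_forall_le (hf : StronglyConvex μ f) (hμ : 0 < μ) (hdiff : Differentiable ℝ f) :
    ∃ x, ∀ y, f x ≤ f y :=
  hf.exists_forall_le_of_bddBelow hμ hdiff.continuous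
    (hf.bddBelow_range hμ (hdiff 0).hasGradientAt)

theorem stronglyMonotone (hf : StronglyConvex μ f) {g : H → H}
    (hg : ∀ x, HasGradientAt f (g x) x) : StronglyMonotone μ g := by
  intro x y
  have hxy := hf.add_inner_gradient_add_le (hg x) y
  have hyx := hf.add_inner_gradient_add_le (hg y) x
  rw [← neg_sub y x, inner_neg_right, norm_neg] at hyx
  rw [inner_sub_left]
  linarith

end StronglyConvex

namespace StronglyMonotone

variable {H : Type*} [NormedAddCommGroup H] [InnerProductSpace ℝ H] {μ : ℝ} {g : H → H}

theorem mul_norm_sub_le (hg : StronglyMonotone μ g) (x y : H) :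
    μ * ‖y - x‖ ≤ ‖g y - g x‖ := by
  rcases (norm_nonneg (y - x)).eq_or_lt with hzero | hpos
  · simp [← hzero]
  · refine le_of_mul_le_mul_right ?_ hpos
    calc μ * ‖y - x‖ * ‖y - x‖ = μ * ‖y - x‖ ^ 2 := by ring
      _ ≤ ⟪g y - g x, y - x⟫ := hg x y
      _ ≤ ‖g y - g x‖ * ‖y - x‖ := real_inner_le_norm _ _

theorem hadamardDeriv (hg : StronglyMonotone μ g) {x : H} {C : H →L[ℝ] H}
    (hC : HadamardDiffAt g x C) : StronglyMonotone μ C := by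
  suffices hquad : ∀ v, μ * ‖v‖ ^ 2 ≤ ⟪C v, v⟫ from
    fun y z => by simpa only [map_sub] using hquad (z - y)
  intro v
  let t : ℕ → ℝ := fun n => 1 / ((n : ℝ) + 1)
  have htpos (n : ℕ) : 0 < t n := Nat.one_div_pos_of_nat
  have hquot := hC.tendsto_inv_smul_sub (tendsto_const_nhds (x := v)) (fun n => (htpos n).ne')
    tendsto_one_div_add_atTop_nhds_zero_nat
  refine ge_of_tendsto' (hquot.inner (𝕜 := ℝ) tendsto_const_nhds) fun n => ?_
  have hmono := hg x (x + t n • v)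
  rw [add_sub_cancel_left, inner_smul_right, norm_smul, Real.norm_of_nonneg (htpos n).le] at hmono
  rw [real_inner_smul_left, le_inv_mul_iff₀ (htpos n)]
  refine le_of_mul_le_mul_left ?_ (htpos n)
  linear_combination hmono

theorem exists_continuousLinearEquiv [CompleteSpace H] {C : H →L[ℝ] H}
    (hC : StronglyMonotone μ C) (hμ : 0 < μ) : ∃ e : H ≃L[ℝ] H, (e : H →L[ℝ] H) = C := by
  have hcoercive : IsCoercive ((innerSL ℝ).comp C : H →L[ℝ] H →L[ℝ] ℝ) :=
    ⟨μ, hμ, fun v => by simpa [pow_two, mul_assoc] using hC 0 v⟩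
  refine ⟨hcoercive.continuousLinearEquivOfBilin, ContinuousLinearMap.ext fun v => ?_⟩
  exact (hcoercive.unique_continuousLinearEquivOfBilin fun _ => by simp).symm

end StronglyMonotone

theorem exists_hadamardDiffAt_of_stronglyMonotone {E H : Type*} [NormedAddCommGroup E]
    [NormedSpace ℝ E] [NormedAddCommGroup H] [InnerProductSpace ℝ H] [CompleteSpace H]
    {G : E → H → H} {h : E → H} {ω : E} {D : E × H →L[ℝ] H} {μ : ℝ} (hμ : 0 < μ)
    (hG : HadamardDiffAt (fun q : E × H => G q.1 q.2) (ω, h ω) D)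
    (hmono : ∀ᶠ ω' in 𝓝 ω, StronglyMonotone μ (G ω')) (hzero : ∀ᶠ ω' in 𝓝 ω, G ω' (h ω') = 0) :
    ∃ J : E →L[ℝ] H, HadamardDiffAt h ω J ∧
      D ∘L .inl ℝ E H + (D ∘L .inr ℝ E H) ∘L J = 0 := by
  have hC : HadamardDiffAt (G ω) (h ω) (D ∘L .inr ℝ E H) := hG.comp_prodMk_right
  obtain ⟨e, he⟩ := (hmono.self_of_nhds.hadamardDeriv hC).exists_continuousLinearEquiv hμ
  let J : E →L[ℝ] H := -(e.symm ∘L D ∘L .inl ℝ E H)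
  have hJ : D ∘L .inl ℝ E H + (D ∘L .inr ℝ E H) ∘L J = 0 := by
    ext v
    simp [← he, J]
  refine ⟨J, .of_implicit hμ hG hzero.self_of_nhds ?_ fun v => ?_, hJ⟩
  · filter_upwards [hmono, hzero] with ω' hmono' hzero' x
    simpa [hzero'] using hmono'.mul_norm_sub_le (h ω') x
  · simpa [← map_add] using DFunLike.congr_fun hJ v

theorem stmt1_general {E H : Type*} [NormedAddCommGroup E] [InnerProductSpace ℝ E]
    [CompleteSpace E] [NormedAddCommGroup H] [InnerProductSpace ℝ H] [CompleteSpace H]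
    (Lin : E → H → ℝ) (gradIn : E → H → H)
    (hsc : ∀ ω : E, ∃ μ > (0 : ℝ), ∃ ε > (0 : ℝ), ∀ ω', ‖ω' - ω‖ < ε → StronglyConvex μ (Lin ω'))
    (hgrad : ∀ ω h, HasGradientAt (Lin ω) (gradIn ω h) h)
    (DG : E × H → (E × H →L[ℝ] H))
    (hDG : ∀ p, HadamardDiffAt (fun q : E × H => gradIn q.1 q.2) p (DG p)) :
    ∃ hstar : E → H,
      (∀ ω h, Lin ω (hstar ω) ≤ Lin ω h) ∧
      (∀ ω h, (∀ h', Lin ω h ≤ Lin ω h') → h = hstar ω) ∧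
      ∀ ω, ∃ J : E →L[ℝ] H,
        HadamardDiffAt hstar ω J ∧
        ContinuousLinearMap.adjoint (DG (ω, hstar ω) ∘L .inl ℝ E H)
          + ContinuousLinearMap.adjoint J ∘L DG (ω, hstar ω) ∘L .inr ℝ E H = 0 := by
  have hconv (ω : E) : ∃ μ > 0, ∀ᶠ ω' in 𝓝 ω, StronglyConvex μ (Lin ω') := by
    obtain ⟨μ, hμ, ε, hε, hball⟩ := hsc ω
    exact ⟨μ, hμ, Metric.eventually_nhds_iff.2
      ⟨ε, hε, fun ω' hω' => hball ω' (by rwa [← dist_eq_norm])⟩⟩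
  choose μ hμ hconv using hconv
  choose hstar hmin using fun ω => (hconv ω).self_of_nhds.exists_forall_le (hμ ω)
    fun h => (hgrad ω h).differentiableAt
  refine ⟨hstar, hmin, fun ω h hh => (hconv ω).self_of_nhds.eq_of_forall_le (hμ ω) hh (hmin ω),
    fun ω => ?_⟩
  obtain ⟨J, hdiff, hJ⟩ := exists_hadamardDiffAt_of_stronglyMonotone (hμ ω) (hDG (ω, hstar ω))
    ((hconv ω).mono fun ω' hω' => hω'.stronglyMonotone (hgrad ω'))
    (.of_forall fun ω' => gradient_eq_zero_of_forall_le (hgrad ω' _) (hmin ω'))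
  have hsymm : IsSelfAdjoint (DG (ω, hstar ω) ∘L .inr ℝ E H) :=
    isSelfAdjoint_of_hadamardDiffAt_gradient (hgrad ω) (hDG (ω, hstar ω)).comp_prodMk_right
  refine ⟨J, hdiff, ?_⟩
  have htranspose := congrArg ContinuousLinearMap.adjoint hJ
  rwa [map_add, ContinuousLinearMap.adjoint_comp, hsymm.adjoint_eq, map_zero] at htranspose

/-- **Functional implicit differentiation.**  Under local strong convexity of the inner
objective in `h`, Fréchet differentiability in `h` (with gradient `gradIn`), and Hadamard
differentiability of the gradient map `(ω, h) ↦ ∂ₕ L_in (ω, h)` (with differential `DG`),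
the minimizer `h*_ω` is uniquely defined, Fréchet differentiable in `ω`, and its derivative
(in adjoint form) satisfies `B_ω + ∂_ω h*_ω ∘ C_ω = 0`. -/
theorem stmt1 {d : ℕ} {H : Type*} [NormedAddCommGroup H] [InnerProductSpace ℝ H]
    [CompleteSpace H] [TopologicalSpace.SeparableSpace H]
    (Lin : EuclideanSpace ℝ (Fin d) → H → ℝ)
    (gradIn : EuclideanSpace ℝ (Fin d) → H → H)
    -- local strong convexity in `h`
    (hsc : ∀ ω : EuclideanSpace ℝ (Fin d), ∃ μ > (0 : ℝ), ∃ ε > (0 : ℝ),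
      ∀ ω', ‖ω' - ω‖ < ε → StronglyConvex μ (Lin ω'))
    -- Fréchet differentiability in `h` with gradient `gradIn ω h`
    (hgrad : ∀ ω h, HasGradientAt (Lin ω) (gradIn ω h) h)
    -- Hadamard differentiability of the gradient map on `Ω × H`
    (DG : EuclideanSpace ℝ (Fin d) × H → (EuclideanSpace ℝ (Fin d) × H →L[ℝ] H))
    (hDG : ∀ p, HadamardDiffAt (fun q : EuclideanSpace ℝ (Fin d) × H => gradIn q.1 q.2) p (DG p)) :
    ∃ hstar : EuclideanSpace ℝ (Fin d) → H,
      -- existence of a minimizer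
      (∀ ω h, Lin ω (hstar ω) ≤ Lin ω h) ∧
      -- uniqueness of the minimizer
      (∀ ω h, (∀ h', Lin ω h ≤ Lin ω h') → h = hstar ω) ∧
      -- Fréchet differentiability of `ω ↦ h*_ω` and the implicit equation
      -- `B_ω + ∂_ω h*_ω ∘ C_ω = 0` (in adjoint form `H → ℝ^d`)
      ∀ ω, ∃ J : EuclideanSpace ℝ (Fin d) →L[ℝ] H,
        HasFDerivAt hstar J ω ∧
        ContinuousLinearMap.adjoint
            ((DG (ω, hstar ω)).comp (ContinuousLinearMap.inl ℝ (EuclideanSpace ℝ (Fin d)) H))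
          + (ContinuousLinearMap.adjoint J).comp
              ((DG (ω, hstar ω)).comp (ContinuousLinearMap.inr ℝ (EuclideanSpace ℝ (Fin d)) H))
          = 0 := by
  obtain ⟨hstar, hmin, huniq, hdiff⟩ := stmt1_general Lin gradIn hsc hgrad DG hDG
  exact ⟨hstar, hmin, huniq, fun ω => (hdiff ω).imp fun _ hJ => ⟨hJ.1.hasFDerivAt, hJ.2⟩⟩
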